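/- arXiv:1402.5509 — 3 statements merged into one kernel-verified Lean document; each statement's English description precedes it below -/
import Mathlib

section
/- Let K be a field and n ≥ 1. Consider the polynomial ring R in the variables T_∞ and T_{ij} for 0 ≤ i < j ≤ n+2 with i ≤ n, and let L be the localization of R at the multiplicative set generated by all these variables. For 0 ≤ i < j ≤ n set f_{ij} := T_{i,n+1}·T_{j,n+2} − T_{i,n+2}·T_{j,n+1}. Then in L the ideal generated by the images of the elements T_{ij}·T_∞ − f_{ij} (for all 0 ≤ i < j ≤ n) equals the ideal generated by the images of the elements T_{ij}·T_∞ − f_{ij} (for all 0 ≤ i < j ≤ n) together with the images of all Plücker relations T_{ij}T_{kl} − T_{ik}T_{jl} + T_{il}T_{jk} for 0 ≤ i < j < k < l ≤ n+2 with k ≤ n. -/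
open MvPolynomial

/-- The index set of the polynomial ring `R` in the variables `T_∞` (the index
`none`) and `T_{ij}` for `0 ≤ i < j ≤ n+2` with `i ≤ n`. -/
abbrev IdxR (n : ℕ) : Type :=
  Option {p : ℕ × ℕ // p.1 < p.2 ∧ p.2 ≤ n + 2 ∧ p.1 ≤ n}

/-- The variable `T_∞`. -/
noncomputable def Tinf (K : Type*) [Field K] (n : ℕ) :
    MvPolynomial (IdxR n) K := X none

/-- The variable `T_{ab}` (junk value `0` for invalid index pairs). -/
noncomputable def T (K : Type*) [Field K] (n a b : ℕ) :
    MvPolynomial (IdxR n) K :=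
  if h : a < b ∧ b ≤ n + 2 ∧ a ≤ n then X (some ⟨(a, b), h⟩) else 0

/-- The function `f_{ij} = T_{i,n+1}·T_{j,n+2} − T_{i,n+2}·T_{j,n+1}`. -/
noncomputable def f (K : Type*) [Field K] (n i j : ℕ) :
    MvPolynomial (IdxR n) K :=
  T K n i (n + 1) * T K n j (n + 2) - T K n i (n + 2) * T K n j (n + 1)

/-- The multiplicative set generated by all the variables. -/
noncomputable abbrev varMonoid (K : Type*) [Field K] (n : ℕ) :
    Submonoid (MvPolynomial (IdxR n) K) :=
  Submonoid.closure (Set.range (X : IdxR n → MvPolynomial (IdxR n) K))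

/-- The Laurent polynomial ring: the localization of `R` at the multiplicative
set generated by all its variables. -/
abbrev Laurent (K : Type*) [Field K] (n : ℕ) : Type _ :=
  Localization (varMonoid K n)

/-- In the Laurent polynomial ring, the ideal generated by the images of the
elements `T_{ij}·T_∞ − f_{ij}` (`0 ≤ i < j ≤ n`) equals the ideal generated by
these elements together with the images of all Plücker relations
`T_{ij}T_{kl} − T_{ik}T_{jl} + T_{il}T_{jk}` for `0 ≤ i < j < k < l ≤ n+2`
with `k ≤ n`. -/
theorem stmt3 (K : Type*) [Field K] (n : ℕ) (hn : 1 ≤ n) :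
    Ideal.span {x : Laurent K n | ∃ i j : ℕ, i < j ∧ j ≤ n ∧
        x = algebraMap (MvPolynomial (IdxR n) K) (Laurent K n)
          (T K n i j * Tinf K n - f K n i j)}
    = Ideal.span ({x : Laurent K n | ∃ i j : ℕ, i < j ∧ j ≤ n ∧
        x = algebraMap (MvPolynomial (IdxR n) K) (Laurent K n)
          (T K n i j * Tinf K n - f K n i j)}
      ∪ {x : Laurent K n | ∃ i j k l : ℕ, i < j ∧ j < k ∧ k < l ∧ l ≤ n + 2 ∧ k ≤ n ∧
        x = algebraMap (MvPolynomial (IdxR n) K) (Laurent K n)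
          (T K n i j * T K n k l - T K n i k * T K n j l + T K n i l * T K n j k)}) := by
  apply le_antisymm
  · exact Ideal.span_mono Set.subset_union_left
  rw [Ideal.span_union]
  refine sup_le le_rfl ?_
  rw [Ideal.span_le]
  rintro x ⟨i, j, k, l, hij, hjk, hkl, hl, hk, rfl⟩
  have hu : IsUnit (algebraMap (MvPolynomial (IdxR n) K) (Laurent K n) (Tinf K n)) :=
    IsLocalization.map_units (Laurent K n)
      (⟨Tinf K n, Submonoid.subset_closure ⟨none, rfl⟩⟩ : varMonoid K n)
  generalize hI : Ideal.span {x : Laurent K n | ∃ i j : ℕ, i < j ∧ j ≤ n ∧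
        x = algebraMap (MvPolynomial (IdxR n) K) (Laurent K n)
          (T K n i j * Tinf K n - f K n i j)} = I
  have ht : ∀ i j : ℕ, i < j → j ≤ n →
      algebraMap (MvPolynomial (IdxR n) K) (Laurent K n)
          (T K n i j * Tinf K n - f K n i j) ∈ I := fun i j h1 h2 => by
    rw [← hI]
    exact Ideal.subset_span ⟨i, j, h1, h2, rfl⟩
  have h1 := ht i j hij (by omega)
  have h2 := ht i k (by omega) (by omega)
  have h3 := ht j k (by omega) (by omega)
  change _ ∈ I
  rw [← Ideal.unit_mul_mem_iff_mem I hu]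
  rcases (by omega : l ≤ n ∨ l = n + 1 ∨ l = n + 2) with h | rfl | rfl
  · have h4 := ht k l (by omega) (by omega)
    have h5 := ht j l (by omega) (by omega)
    have h6 := ht i l (by omega) (by omega)
    rw [← Ideal.unit_mul_mem_iff_mem I hu]
    have key := I.add_mem (I.sub_mem
      (I.add_mem (I.mul_mem_left (algebraMap _ _ (T K n k l * Tinf K n)) h1)
        (I.mul_mem_left (algebraMap _ _ (f K n i j)) h4))
      (I.add_mem (I.mul_mem_left (algebraMap _ _ (T K n j l * Tinf K n)) h2)
        (I.mul_mem_left (algebraMap _ _ (f K n i k)) h5)))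
      (I.add_mem (I.mul_mem_left (algebraMap _ _ (T K n j k * Tinf K n)) h6)
        (I.mul_mem_left (algebraMap _ _ (f K n i l)) h3))
    convert key using 1
    simp only [← map_mul, ← map_add, ← map_sub]
    congr 1
    simp only [f]
    ring
  · have key := I.add_mem (I.sub_mem
      (I.mul_mem_left (algebraMap _ _ (T K n k (n + 1))) h1)
      (I.mul_mem_left (algebraMap _ _ (T K n j (n + 1))) h2))
      (I.mul_mem_left (algebraMap _ _ (T K n i (n + 1))) h3)
    convert key using 1
    simp only [← map_mul, ← map_add, ← map_sub]
    congr 1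
    simp only [f]
    ring
  · have key := I.add_mem (I.sub_mem
      (I.mul_mem_left (algebraMap _ _ (T K n k (n + 2))) h1)
      (I.mul_mem_left (algebraMap _ _ (T K n j (n + 2))) h2))
      (I.mul_mem_left (algebraMap _ _ (T K n i (n + 2))) h3)
    convert key using 1
    simp only [← map_mul, ← map_add, ← map_sub]
    congr 1
    simp only [f]
    ring
end

section
/- Let K be an algebraically closed field and N ≥ 4. In the polynomial ring K[S_{ij} : 1 ≤ i < j ≤ N], the ideal generated by all Plücker relations S_{ij}S_{kl} − S_{ik}S_{jl} + S_{il}S_{jk} for 1 ≤ i < j < k < l ≤ N is a prime ideal. -/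
open MvPolynomial

/-- The index set of the polynomial ring `K[S_{ij} : 1 ≤ i < j ≤ N]`. -/
abbrev PairIdx (N : ℕ) : Type := {p : ℕ × ℕ // 1 ≤ p.1 ∧ p.1 < p.2 ∧ p.2 ≤ N}

/-- The variable `S_{ab}` of `K[S_{ij} : 1 ≤ i < j ≤ N]` (junk value `0` for
invalid index pairs). -/
noncomputable def S (K : Type*) [Field K] (N a b : ℕ) :
    MvPolynomial (PairIdx N) K :=
  if h : 1 ≤ a ∧ a < b ∧ b ≤ N then X ⟨(a, b), h⟩ else 0

namespace Plu

open OrderDual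

instance pairFinite (N : ℕ) : Finite (PairIdx N) :=
  Finite.of_injective
    (fun p : PairIdx N => ((⟨p.1.1, by have := p.2; omega⟩, ⟨p.1.2, by have := p.2; omega⟩) :
      Fin (N + 1) × Fin (N + 1)))
    (by
      intro p q h
      simp only [Prod.mk.injEq, Fin.mk.injEq] at h
      exact Subtype.ext (Prod.ext h.1 h.2))

/-- standard exponent vectors: no nested pair in the support -/
def Std {N : ℕ} (d : PairIdx N →₀ ℕ) : Prop :=
  ∀ p q : PairIdx N, d p ≠ 0 → d q ≠ 0 → ¬ (p.1.1 < q.1.1 ∧ q.1.2 < p.1.2)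

/-- expected leading exponent of the image of a variable -/
noncomputable def ev {N : ℕ} (p : PairIdx N) : ℕᵒᵈ →₀ ℕ :=
  Finsupp.single (toDual (2 * p.1.2 + 1)) 1 + Finsupp.single (toDual (2 * p.1.1)) 1

noncomputable def ev' {N : ℕ} (p : PairIdx N) : ℕᵒᵈ →₀ ℕ :=
  Finsupp.single (toDual (2 * p.1.1 + 1)) 1 + Finsupp.single (toDual (2 * p.1.2)) 1

noncomputable def gp (K : Type*) [Field K] {N : ℕ} (p : PairIdx N) : MvPolynomial ℕᵒᵈ K :=
  monomial (ev p) 1 - monomial (ev' p) 1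

noncomputable def phi (K : Type*) [Field K] (N : ℕ) :
    MvPolynomial (PairIdx N) K →ₐ[K] MvPolynomial ℕᵒᵈ K := aeval (gp K)

noncomputable abbrev D {N : ℕ} : (PairIdx N →₀ ℕ) →+ (ℕᵒᵈ →₀ ℕ) := Finsupp.weight ev

theorem ev_lt {N : ℕ} (p : PairIdx N) :
    MonomialOrder.lex.toSyn (ev' p) < MonomialOrder.lex.toSyn (ev p) := by
  rw [MonomialOrder.lex_lt_iff, Finsupp.Lex.lt_iff]
  have h := p.2
  refine ⟨toDual (2 * p.1.2 + 1), ?_, ?_⟩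
  · intro j hj
    have hj' : 2 * p.1.2 + 1 < ofDual j := hj
    have e : ∀ n : ℕ, n ≤ 2 * p.1.2 + 1 → toDual n ≠ j := by
      intro n hn h
      subst h
      simp at hj'
      omega
    simp only [ev, ev', ofLex_toLex, Finsupp.add_apply]
    rw [Finsupp.single_eq_of_ne' (e _ (by omega)), Finsupp.single_eq_of_ne' (e _ (by omega)),
      Finsupp.single_eq_of_ne' (e _ (by omega)), Finsupp.single_eq_of_ne' (e _ (by omega))]
  · have e : ∀ n m : ℕ, n ≠ m → toDual n ≠ toDual m := fun n m h h' => h (toDual.injective h')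
    simp only [ev, ev', ofLex_toLex, Finsupp.add_apply]
    rw [Finsupp.single_eq_of_ne' (e _ _ (by omega)), Finsupp.single_eq_of_ne' (e _ _ (by omega)),
      Finsupp.single_eq_same]
    omega

theorem gp_lead (K : Type*) [Field K] {N : ℕ} (p : PairIdx N) :
    MonomialOrder.lex.degree (gp K p) = ev p ∧ MonomialOrder.lex.Monic (gp K p) := by
  classical
  have h : MonomialOrder.lex.toSyn (MonomialOrder.lex.degree (monomial (ev' p) (1 : K))) <
      MonomialOrder.lex.toSyn (MonomialOrder.lex.degree (monomial (ev p) (1 : K))) := by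
    simp only [MonomialOrder.degree_monomial, one_ne_zero, if_false]
    exact ev_lt p
  constructor
  · rw [gp, MonomialOrder.degree_sub_of_lt h]
    simp [MonomialOrder.degree_monomial]
  · rw [MonomialOrder.Monic, gp, MonomialOrder.leadingCoeff_sub_of_lt h]
    simp

theorem phi_lead (K : Type*) [Field K] {N : ℕ} (d : PairIdx N →₀ ℕ) :
    MonomialOrder.lex.degree (phi K N (monomial d 1)) = D d ∧
      MonomialOrder.lex.Monic (phi K N (monomial d 1)) := by
  induction d using Finsupp.induction_linear with
  | zero =>
    have : phi K N (monomial 0 1) = 1 := by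
      rw [← C_apply, map_one, map_one]
    rw [this]
    exact ⟨by rw [MonomialOrder.degree_one, map_zero], MonomialOrder.monic_one⟩
  | add f g hf hg =>
    have : phi K N (monomial (f + g) 1) = phi K N (monomial f 1) * phi K N (monomial g 1) := by
      rw [← map_mul, monomial_mul, one_mul]
    rw [this]
    refine ⟨?_, hf.2.mul hg.2⟩
    rw [MonomialOrder.degree_mul hf.2.ne_zero hg.2.ne_zero, hf.1, hg.1, map_add]
  | single p n =>
    have : phi K N (monomial (Finsupp.single p n) 1) = gp K p ^ n := by
      rw [← X_pow_eq_monomial, map_pow, phi, aeval_X]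
    rw [this]
    refine ⟨?_, ?_⟩
    · rw [MonomialOrder.degree_pow, (gp_lead K p).1, D, Finsupp.weight_single]
    · rw [MonomialOrder.Monic, MonomialOrder.leadingCoeff_pow, (gp_lead K p).2, one_pow]

theorem D_fst {N : ℕ} [Fintype (PairIdx N)] (d : PairIdx N →₀ ℕ) (a : ℕ) :
    D d (toDual (2 * a)) = ∑ p : PairIdx N, if p.1.1 = a then d p else 0 := by
  rw [D, Finsupp.weight_eq_sum, Finsupp.finsetSum_apply]
  refine Finset.sum_congr rfl fun p _ => ?_
  have e : 2 * p.1.2 + 1 ≠ 2 * a := by omega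
  have e' : 2 * p.1.1 = 2 * a ↔ p.1.1 = a := by omega
  simp only [ev, Finsupp.smul_apply, Finsupp.add_apply, Finsupp.single_apply,
    toDual.injective.eq_iff, e, e', if_false, smul_eq_mul]
  split_ifs <;> simp

theorem D_snd {N : ℕ} [Fintype (PairIdx N)] (d : PairIdx N →₀ ℕ) (a : ℕ) :
    D d (toDual (2 * a + 1)) = ∑ p : PairIdx N, if p.1.2 = a then d p else 0 := by
  rw [D, Finsupp.weight_eq_sum, Finsupp.finsetSum_apply]
  refine Finset.sum_congr rfl fun p _ => ?_
  have e : 2 * p.1.1 ≠ 2 * a + 1 := by omega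
  have e' : 2 * p.1.2 + 1 = 2 * a + 1 ↔ p.1.2 = a := by omega
  simp only [ev, Finsupp.smul_apply, Finsupp.add_apply, Finsupp.single_apply,
    toDual.injective.eq_iff, e, e', if_false, smul_eq_mul]
  split_ifs <;> simp

theorem sum_aux {ι : Type*} [Fintype ι] (f g : ι → ℕ) (h : ∑ i, f i = ∑ i, g i) (i : ι)
    (hi : g i < f i) : ∃ j, f j < g j := by
  by_contra! hc
  have := Finset.sum_lt_sum (s := Finset.univ) (fun j _ => hc j) ⟨i, Finset.mem_univ _, hi⟩
  omega

theorem inj_aux {N : ℕ} (d d' : PairIdx N →₀ ℕ) (hd' : Std d')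
    (h : D d = D d') (p : PairIdx N)
    (hmin : ∀ q : PairIdx N, d q ≠ d' q → p.1.1 + p.1.2 ≤ q.1.1 + q.1.2)
    (hp : d' p < d p) : False := by
  classical
  have := Fintype.ofFinite (PairIdx N)
  have h1 := D_fst d p.1.1
  rw [h, D_fst] at h1
  have h2 := D_snd d p.1.2
  rw [h, D_snd] at h2
  obtain ⟨q, hq⟩ := sum_aux _ _ h1.symm p (by simpa using hp)
  obtain ⟨r, hr⟩ := sum_aux _ _ h2.symm p (by simpa using hp)
  have hq1 : q.1.1 = p.1.1 := by
    by_contra hc; simp [hc] at hq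
  have hr1 : r.1.2 = p.1.2 := by
    by_contra hc; simp [hc] at hr
  simp only [hq1, hr1, if_true] at hq hr
  have hqp : q.1.2 ≠ p.1.2 := by
    intro hc
    have : q = p := Subtype.ext (Prod.ext hq1 hc)
    subst this; omega
  have hrp : r.1.1 ≠ p.1.1 := by
    intro hc
    have : r = p := Subtype.ext (Prod.ext hc hr1)
    subst this; omega
  have m1 := hmin q hq.ne
  have m2 := hmin r hr.ne
  exact hd' q r (by omega) (by omega) ⟨by omega, by omega⟩

theorem D_inj {N : ℕ} (d d' : PairIdx N →₀ ℕ) (hd : Std d) (hd' : Std d')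
    (h : D d = D d') : d = d' := by
  by_contra hne
  have hex : ∃ p, d p ≠ d' p := by
    by_contra! hc
    exact hne (Finsupp.ext hc)
  obtain ⟨p, hp, hmin⟩ := Set.exists_min_image {p : PairIdx N | d p ≠ d' p}
    (fun p => p.1.1 + p.1.2) (Set.toFinite _) hex
  rcases Nat.lt_or_gt_of_ne hp with hlt | hlt
  · exact inj_aux d' d hd h.symm p (fun q hq => hmin q (Ne.symm hq)) hlt
  · exact inj_aux d d' hd' h p (fun q hq => hmin q hq) hlt

/-- polynomials supported on standard monomials -/
theorem std_indep (K : Type*) [Field K] {N : ℕ} (w : MvPolynomial (PairIdx N) K)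
    (hw : ∀ d ∈ w.support, Std d) (h0 : phi K N w = 0) : w = 0 := by
  classical
  by_contra hne
  obtain ⟨d0, hd0, hmax⟩ := Finset.exists_max_image w.support
    (fun d => MonomialOrder.lex.toSyn (D d)) (by
      rw [Finset.nonempty_iff_ne_empty]; simpa using hne)
  have key : coeff (D d0) (phi K N w) = coeff d0 w := by
    conv_lhs => rw [w.as_sum, map_sum, coeff_sum]
    rw [Finset.sum_eq_single d0]
    · have : monomial d0 (coeff d0 w) = (coeff d0 w) • (monomial d0 1 : MvPolynomial (PairIdx N) K) := by
        rw [smul_monomial, smul_eq_mul, mul_one]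
      rw [this, map_smul, coeff_smul, ← (phi_lead K d0).1, (phi_lead K d0).2.coeff_degree]
      simp
    · intro d hd hdne
      have : monomial d (coeff d w) = (coeff d w) • (monomial d 1 : MvPolynomial (PairIdx N) K) := by
        rw [smul_monomial, smul_eq_mul, mul_one]
      rw [this, map_smul, coeff_smul]
      suffices hz : coeff (D d0) (phi K N (monomial d 1)) = 0 by rw [hz, smul_zero]
      apply MonomialOrder.coeff_eq_zero_of_lt (m := MonomialOrder.lex)
      rw [(phi_lead K d).1]
      refine lt_of_le_of_ne (hmax d hd) fun he => hdne ?_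
      exact D_inj _ _ (hw d hd) (hw d0 hd0) (MonomialOrder.lex.toSyn.injective he)
    · intro hc; exact absurd hd0 hc
  rw [h0, coeff_zero] at key
  exact (mem_support_iff.mp hd0) key.symm

abbrev rels (K : Type*) [Field K] (N : ℕ) : Set (MvPolynomial (PairIdx N) K) :=
  {x : MvPolynomial (PairIdx N) K | ∃ i j k l : ℕ,
        1 ≤ i ∧ i < j ∧ j < k ∧ k < l ∧ l ≤ N ∧
        x = S K N i j * S K N k l - S K N i k * S K N j l
          + S K N i l * S K N j k}

theorem phi_S (K : Type*) [Field K] (N a b : ℕ) (h : 1 ≤ a ∧ a < b ∧ b ≤ N) :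
    phi K N (S K N a b) = X (toDual (2 * b + 1)) * X (toDual (2 * a))
      - X (toDual (2 * a + 1)) * X (toDual (2 * b)) := by
  rw [S, dif_pos h, phi, aeval_X, gp, ev, ev']
  simp only [X, monomial_mul, one_mul]

theorem rels_ker (K : Type*) [Field K] (N : ℕ) :
    Ideal.span (rels K N) ≤ RingHom.ker (phi K N) := by
  rw [Ideal.span_le]
  rintro x ⟨i, j, k, l, h1, h2, h3, h4, h5, rfl⟩
  rw [SetLike.mem_coe, RingHom.mem_ker]
  simp only [map_add, map_sub, map_mul]
  rw [phi_S, phi_S, phi_S, phi_S, phi_S, phi_S]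
  · ring
  all_goals omega

noncomputable abbrev ms {N : ℕ} : (PairIdx N →₀ ℕ) →+ ℕ :=
  Finsupp.weight (fun p : PairIdx N => (p.1.2 - p.1.1) ^ 2)

theorem straighten (K : Type*) [Field K] (N : ℕ) (n : ℕ) : ∀ d : PairIdx N →₀ ℕ, ms d = n →
    ∃ w : MvPolynomial (PairIdx N) K, (∀ e ∈ w.support, Std e) ∧
      monomial d 1 - w ∈ Ideal.span (rels K N) := by
  classical
  induction n using Nat.strong_induction_on with
  | _ n ih =>
  intro d hd
  by_cases hs : Std d
  · refine ⟨monomial d 1, fun e he => ?_, by simp⟩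
    have := support_monomial_subset he
    rw [Finset.mem_singleton] at this
    exact this ▸ hs
  · unfold Std at hs
    push Not at hs
    obtain ⟨p, q, hp, hq, h1, h2⟩ := hs
    obtain ⟨⟨i, l⟩, hil⟩ := p
    obtain ⟨⟨j, k⟩, hjk⟩ := q
    simp only at h1 h2 hil hjk
    set p : PairIdx N := ⟨(i, l), hil⟩ with hpdef
    set q : PairIdx N := ⟨(j, k), hjk⟩ with hqdef
    have hpq : p ≠ q := by
      intro h
      simp [hpdef, hqdef] at h
      omega
    have hle : Finsupp.single p 1 + Finsupp.single q 1 ≤ d := by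
      intro r
      rw [Finsupp.add_apply]
      by_cases hr : r = p
      · subst hr
        rw [Finsupp.single_eq_same, Finsupp.single_eq_of_ne hpq]
        omega
      · rw [Finsupp.single_eq_of_ne hr]
        by_cases hr' : r = q
        · subst hr'
          rw [Finsupp.single_eq_same]
          omega
        · rw [Finsupp.single_eq_of_ne hr']
          omega
    obtain ⟨e, he⟩ := exists_add_of_le hle
    have hik : 1 ≤ i ∧ i < k ∧ k ≤ N := by omega
    have hjl : 1 ≤ j ∧ j < l ∧ l ≤ N := by omega
    have hij : 1 ≤ i ∧ i < j ∧ j ≤ N := by omega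
    have hkl : 1 ≤ k ∧ k < l ∧ l ≤ N := by omega
    set d1 : PairIdx N →₀ ℕ :=
      Finsupp.single ⟨(i, k), hik⟩ 1 + Finsupp.single ⟨(j, l), hjl⟩ 1 + e with hd1
    set d2 : PairIdx N →₀ ℕ :=
      Finsupp.single ⟨(i, j), hij⟩ 1 + Finsupp.single ⟨(k, l), hkl⟩ 1 + e with hd2
    obtain ⟨a, rfl⟩ := Nat.exists_eq_add_of_lt h1
    obtain ⟨b, rfl⟩ := Nat.exists_eq_add_of_lt hjk.2.1
    obtain ⟨c, rfl⟩ := Nat.exists_eq_add_of_lt h2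
    have hmd : ms d = (a + b + c + 3) ^ 2 + (b + 1) ^ 2 + ms e := by
      rw [he]
      simp only [ms, map_add, Finsupp.weight_single, one_smul, hpdef, hqdef]
      congr 3 <;> omega
    have hmd1 : ms d1 = (a + b + 2) ^ 2 + (b + c + 2) ^ 2 + ms e := by
      rw [hd1]
      simp only [ms, map_add, Finsupp.weight_single, one_smul]
      congr 3 <;> omega
    have hmd2 : ms d2 = (a + 1) ^ 2 + (c + 1) ^ 2 + ms e := by
      rw [hd2]
      simp only [ms, map_add, Finsupp.weight_single, one_smul]
      congr 3 <;> omega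
    obtain ⟨w1, hw1, hw1'⟩ := ih (ms d1) (by rw [← hd, hmd, hmd1]; nlinarith [Nat.zero_le (a * c)]) d1 rfl
    obtain ⟨w2, hw2, hw2'⟩ := ih (ms d2) (by
      rw [← hd, hmd, hmd2]
      nlinarith [Nat.zero_le (a * c), Nat.zero_le (a * b), Nat.zero_le (b * c)]) d2 rfl
    refine ⟨w1 - w2, ?_, ?_⟩
    · intro f hf
      rcases Finset.mem_union.mp (support_sub _ _ _ hf) with h | h
      · exact hw1 f h
      · exact hw2 f h
    · have hrel := Ideal.subset_span (s := rels K N)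
        ⟨i, _, _, _, hil.1, h1, hjk.2.1, h2, hil.2.2, rfl⟩
      rw [S, S, S, S, S, S, dif_pos hij, dif_pos hkl, dif_pos hik, dif_pos hjl, dif_pos hil,
        dif_pos hjk] at hrel
      have hmul := Ideal.mul_mem_right (monomial e (1 : K)) _ hrel
      have e0 : monomial d (1 : K) = X p * X q * monomial e 1 := by
        rw [he]; simp only [X, monomial_mul, one_mul]
      have e1 : monomial d1 (1 : K) = X ⟨(i, _), hik⟩ * X ⟨(_, _), hjl⟩ * monomial e 1 := by
        rw [hd1]; simp only [X, monomial_mul, one_mul]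
      have e2 : monomial d2 (1 : K) = X ⟨(i, _), hij⟩ * X ⟨(_, _), hkl⟩ * monomial e 1 := by
        rw [hd2]; simp only [X, monomial_mul, one_mul]
      have := Ideal.add_mem _ hmul (Ideal.sub_mem _ hw1' hw2')
      convert this using 1
      rw [e0, e1, e2]
      ring

theorem straighten_all (K : Type*) [Field K] (N : ℕ) (f : MvPolynomial (PairIdx N) K) :
    ∃ w : MvPolynomial (PairIdx N) K, (∀ e ∈ w.support, Std e) ∧
      f - w ∈ Ideal.span (rels K N) := by
  classical
  induction f using MvPolynomial.monomial_add_induction_on with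
  | C a =>
    refine ⟨C a, fun e he => ?_, by simp⟩
    have := support_monomial_subset he
    rw [Finset.mem_singleton] at this
    subst this
    intro p q hp
    simp at hp
  | monomial_add d a f _ _ hf =>
    obtain ⟨w, hw, hw'⟩ := hf
    obtain ⟨v, hv, hv'⟩ := straighten K N _ d rfl
    refine ⟨C a * v + w, ?_, ?_⟩
    · intro e he
      rcases Finset.mem_union.mp (support_add he) with h | h
      · refine hv e ?_
        rw [mem_support_iff, coeff_C_mul] at h
        exact mem_support_iff.mpr (right_ne_zero_of_mul h)
      · exact hw e h
    · have := Ideal.add_mem _ (Ideal.mul_mem_left _ (C a) hv') hw'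
      convert this using 1
      have : monomial d a = C a * (monomial d 1 : MvPolynomial (PairIdx N) K) := by
        rw [C_mul_monomial, mul_one]
      rw [this]
      ring

theorem rels_eq (K : Type*) [Field K] (N : ℕ) :
    Ideal.span (rels K N) = RingHom.ker (phi K N) := by
  refine le_antisymm (rels_ker K N) fun f hf => ?_
  obtain ⟨w, hw, hw'⟩ := straighten_all K N f
  have h := rels_ker K N hw'
  rw [RingHom.mem_ker] at h hf
  rw [map_sub, hf, zero_sub, neg_eq_zero] at h
  have := std_indep K w hw h
  rwa [this, sub_zero] at hw'

end Plu

/-- In `K[S_{ij} : 1 ≤ i < j ≤ N]` the ideal generated by all Plücker relations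
`S_{ij}S_{kl} − S_{ik}S_{jl} + S_{il}S_{jk}` for `1 ≤ i < j < k < l ≤ N` is
prime. -/
theorem stmt8 (K : Type*) [Field K] [IsAlgClosed K] (N : ℕ) (hN : 4 ≤ N) :
    (Ideal.span {x : MvPolynomial (PairIdx N) K | ∃ i j k l : ℕ,
        1 ≤ i ∧ i < j ∧ j < k ∧ k < l ∧ l ≤ N ∧
        x = S K N i j * S K N k l - S K N i k * S K N j l
          + S K N i l * S K N j k}).IsPrime := by
  have h := Plu.rels_eq K N
  have h2 : (RingHom.ker (Plu.phi K N)).IsPrime := RingHom.ker_isPrime _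
  rw [← h] at h2
  exact h2
end

section
/- Let K be an algebraically closed field, r ≥ 1 an integer, and n_1, …, n_r ≥ 1 integers. Identify the polynomial ring in the variables _sT_{ij} (s = 1, …, r, 0 ≤ i ≤ n_s, j ∈ {n_s+1, n_s+2}) with the ring of polynomial functions on the product ∏_{s=1}^{r} (K^{n_s+1} × K^{n_s+1}), where for each s the vector u_s ∈ K^{n_s+1} has coordinates _sT_{i,n_s+1} and v_s ∈ K^{n_s+1} has coordinates _sT_{i,n_s+2}. Let W be the set of tuples ((u_1, v_1), …, (u_r, v_r)) such that for every s the vectors u_s and v_s are nonzero and linearly dependent over K. Then the vanishing ideal I(W) equals the ideal generated by all 2×2 minors _sT_{i,n_s+1}·_sT_{j,n_s+2} − _sT_{i,n_s+2}·_sT_{j,n_s+1} for s = 1, …, r and 0 ≤ i < j ≤ n_s, and this ideal is prime. -/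
open MvPolynomial

/-- The index set of the polynomial ring in the variables `_sT_{ij}`
(`s = 1,…,r`, `0 ≤ i ≤ n_s`, `j ∈ {n_s+1, n_s+2}`): the index `⟨s, (i, 0)⟩`
stands for `_sT_{i,n_s+1}` and `⟨s, (i, 1)⟩` for `_sT_{i,n_s+2}`. A point
`v : IdxW r n → K` of `∏_{s} (K^{n_s+1} × K^{n_s+1})` has `s`-th component
`(u_s, v_s)` where `u_s = (v ⟨s,(i,0)⟩)_i` and `v_s = (v ⟨s,(i,1)⟩)_i`. -/
abbrev IdxW (r : ℕ) (n : Fin r → ℕ) : Type := Σ s : Fin r, Fin (n s + 1) × Fin 2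

/-- The vector `u_s ∈ K^{n_s+1}` of a point of `∏_{s} (K^{n_s+1} × K^{n_s+1})`. -/
def uVec {K : Type*} {r : ℕ} {n : Fin r → ℕ} (v : IdxW r n → K) (s : Fin r) :
    Fin (n s + 1) → K :=
  fun i => v ⟨s, (i, 0)⟩

/-- The vector `v_s ∈ K^{n_s+1}` of a point of `∏_{s} (K^{n_s+1} × K^{n_s+1})`. -/
def vVec {K : Type*} {r : ℕ} {n : Fin r → ℕ} (v : IdxW r n → K) (s : Fin r) :
    Fin (n s + 1) → K :=
  fun i => v ⟨s, (i, 1)⟩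

/-- The set `W` of tuples `((u_1,v_1), …, (u_r,v_r))` such that for every `s`
the vectors `u_s` and `v_s` are nonzero and linearly dependent over `K`. -/
def W (K : Type*) [Field K] (r : ℕ) (n : Fin r → ℕ) : Set (IdxW r n → K) :=
  {v | ∀ s : Fin r, uVec v s ≠ 0 ∧ vVec v s ≠ 0 ∧
    ¬ LinearIndependent K ![uVec v s, vVec v s]}

/-- The ideal generated by all the `2×2` minors
`_sT_{i,n_s+1}·_sT_{j,n_s+2} − _sT_{i,n_s+2}·_sT_{j,n_s+1}` (`s = 1,…,r`,
`0 ≤ i < j ≤ n_s`) of the `2×(n_s+1)` matrices whose columns are the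
`(_sT_{i,n_s+1}, _sT_{i,n_s+2})ᵗ`. -/
noncomputable def minorsIdeal (K : Type*) [Field K] (r : ℕ) (n : Fin r → ℕ) :
    Ideal (MvPolynomial (IdxW r n) K) :=
  Ideal.span {x | ∃ s : Fin r, ∃ i j : Fin (n s + 1), i < j ∧
    x = X ⟨s, (i, 0)⟩ * X ⟨s, (j, 1)⟩ - X ⟨s, (i, 1)⟩ * X ⟨s, (j, 0)⟩}


def rowI {r : ℕ} {n : Fin r → ℕ} (t : IdxW r n) : Σ s : Fin r, Fin (n s + 1) := ⟨t.1, t.2.1⟩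

def colI {r : ℕ} {n : Fin r → ℕ} (t : IdxW r n) : Fin r × Fin 2 := (t.1, t.2.2)

abbrev RC (r : ℕ) (n : Fin r → ℕ) : Type := (Σ s : Fin r, Fin (n s + 1)) ⊕ (Fin r × Fin 2)

theorem rc_inj {r : ℕ} {n : Fin r → ℕ} {a b : IdxW r n} (h1 : rowI a = rowI b)
    (h2 : colI a = colI b) : a = b := by
  obtain ⟨s, i, c⟩ := a
  obtain ⟨s', i', c'⟩ := b
  simp only [rowI, colI, Sigma.mk.injEq, Prod.mk.injEq] at h1 h2
  obtain ⟨rfl, h1⟩ := h1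
  obtain ⟨-, rfl⟩ := h2
  obtain rfl := eq_of_heq h1
  rfl

theorem minor_mem (K : Type*) [Field K] {r : ℕ} {n : Fin r → ℕ} (s : Fin r)
    (i j : Fin (n s + 1)) (c d : Fin 2) :
    (X ⟨s, (i, c)⟩ * X ⟨s, (j, d)⟩ - X ⟨s, (i, d)⟩ * X ⟨s, (j, c)⟩ :
      MvPolynomial (IdxW r n) K) ∈ minorsIdeal K r n := by
  have key : ∀ i j : Fin (n s + 1), (X ⟨s, (i, 0)⟩ * X ⟨s, (j, 1)⟩ - X ⟨s, (i, 1)⟩ * X ⟨s, (j, 0)⟩ :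
      MvPolynomial (IdxW r n) K) ∈ minorsIdeal K r n := by
    intro i j
    rcases lt_trichotomy i j with h | h | h
    · exact Ideal.subset_span ⟨s, i, j, h, rfl⟩
    · subst h
      convert Ideal.zero_mem _ using 1
      ring
    · have := (minorsIdeal K r n).neg_mem (Ideal.subset_span ⟨s, j, i, h, rfl⟩)
      convert this using 1
      ring
  by_cases hcd : c = d
  · subst hcd
    simp
  have : (c = 0 ∧ d = 1) ∨ (c = 1 ∧ d = 0) := by omega
  rcases this with ⟨rfl, rfl⟩ | ⟨rfl, rfl⟩
  · exact key i j
  · convert key j i using 1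
    ring

theorem congr_mon (K : Type*) [Field K] {r : ℕ} {n : Fin r → ℕ} (M : Multiset (IdxW r n)) :
    ∀ M' : Multiset (IdxW r n), M.map rowI = M'.map rowI → M.map colI = M'.map colI →
      Ideal.Quotient.mk (minorsIdeal K r n) (M.map X).prod =
        Ideal.Quotient.mk (minorsIdeal K r n) (M'.map X).prod := by
  induction M using Multiset.induction_on with
  | empty =>
    intro M' h _
    have : M' = 0 := by simpa using h.symm
    rw [this]
  | cons a M ih =>
    intro M' h1 h2
    obtain ⟨b, hb, hba⟩ : ∃ b ∈ M', rowI b = rowI a := by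
      rw [← Multiset.mem_map, ← h1]; simp
    obtain ⟨b', hb', hba'⟩ : ∃ b ∈ M', colI b = colI a := by
      rw [← Multiset.mem_map, ← h2]; simp
    by_cases hab : b = a
    · subst hab
      obtain ⟨N, rfl⟩ := Multiset.exists_cons_of_mem hb
      simp only [Multiset.map_cons, Multiset.cons_inj_right] at h1 h2
      simp only [Multiset.map_cons, Multiset.prod_cons, map_mul, ih N h1 h2]
    · have hne : b' ≠ b := by
        rintro rfl
        exact hab (rc_inj hba hba')
      obtain ⟨N, rfl⟩ := Multiset.exists_cons_of_mem hb
      obtain ⟨L, rfl⟩ := Multiset.exists_cons_of_mem ((Multiset.mem_cons.1 hb').resolve_left hne)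
      obtain ⟨s, i, c⟩ := a
      obtain ⟨s1, i1, c1⟩ := b
      obtain ⟨s2, i2, c2⟩ := b'
      have e1 : s1 = s := congrArg Sigma.fst hba
      subst e1
      have e2 : i1 = i := by simpa [rowI] using hba
      subst e2
      have e3 : s2 = s1 := congrArg Prod.fst hba'
      subst e3
      have e4 : c2 = c := congrArg Prod.snd hba'
      subst e4
      have hh := ih (⟨s2, (i2, c1)⟩ ::ₘ L) (by
        simpa [rowI] using h1) (by
        simp only [Multiset.map_cons, colI] at h2 ⊢
        rw [Multiset.cons_swap] at h2
        simpa using h2)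
      have hm := Ideal.Quotient.eq.2 (minor_mem K s2 i1 i2 c2 c1)
      simp only [Multiset.map_cons, Multiset.prod_cons, map_mul] at hh hm ⊢
      rw [hh, ← mul_assoc, hm, mul_assoc]

noncomputable def segre (K : Type*) [Field K] (r : ℕ) (n : Fin r → ℕ) :
    MvPolynomial (IdxW r n) K →ₐ[K] MvPolynomial (RC r n) K :=
  aeval fun t => X (Sum.inl (rowI t)) * X (Sum.inr (colI t))

def expo {r : ℕ} {n : Fin r → ℕ} (m : Multiset (IdxW r n)) : Multiset (RC r n) :=
  m.map (fun t => Sum.inl (rowI t)) + m.map (fun t => Sum.inr (colI t))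

theorem mon_eq {σ K : Type*} [Field K] (m : σ →₀ ℕ) :
    (monomial m 1 : MvPolynomial σ K) = (m.toMultiset.map X).prod := by
  classical
  rw [monomial_eq, Finsupp.toMultiset_map, Finsupp.prod_toMultiset]
  simp [Finsupp.prod_mapDomain_index, pow_add]

theorem segre_mon (K : Type*) [Field K] {r : ℕ} {n : Fin r → ℕ} (m : IdxW r n →₀ ℕ) :
    segre K r n (monomial m 1) =
      monomial (Multiset.toFinsupp (expo m.toMultiset)) 1 := by
  rw [mon_eq, mon_eq, map_multiset_prod]
  simp [expo, segre, Multiset.prod_map_mul, Function.comp_def]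

theorem expo_inj {r : ℕ} {n : Fin r → ℕ} {M M' : Multiset (IdxW r n)} (h : expo M = expo M') :
    M.map rowI = M'.map rowI ∧ M.map colI = M'.map colI := by
  have hl : ∀ M : Multiset (IdxW r n), (expo M).filterMap Sum.getLeft? = M.map rowI := by
    intro M
    induction M using Multiset.induction_on with
    | empty => simp [expo]
    | cons a M ih =>
      have e : expo (a ::ₘ M) = Sum.inl (rowI a) ::ₘ Sum.inr (colI a) ::ₘ expo M := by
        simp only [expo, Multiset.map_cons, Multiset.cons_add, Multiset.add_cons]
        exact Multiset.cons_swap _ _ _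
      rw [e, Multiset.filterMap_cons_some Sum.getLeft? (Sum.inl (rowI a)) _ rfl,
        Multiset.filterMap_cons_none _ _ rfl, ih, Multiset.map_cons]
  have hr : ∀ M : Multiset (IdxW r n), (expo M).filterMap Sum.getRight? = M.map colI := by
    intro M
    induction M using Multiset.induction_on with
    | empty => simp [expo]
    | cons a M ih =>
      have e : expo (a ::ₘ M) = Sum.inl (rowI a) ::ₘ Sum.inr (colI a) ::ₘ expo M := by
        simp only [expo, Multiset.map_cons, Multiset.cons_add, Multiset.add_cons]
        exact Multiset.cons_swap _ _ _
      rw [e, Multiset.filterMap_cons_none _ _ rfl,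
        Multiset.filterMap_cons_some Sum.getRight? (Sum.inr (colI a)) _ rfl, ih, Multiset.map_cons]
  exact ⟨by rw [← hl, h, hl], by rw [← hr, h, hr]⟩

theorem ker_le (K : Type*) [Field K] {r : ℕ} {n : Fin r → ℕ} (p : MvPolynomial (IdxW r n) K)
    (hp : segre K r n p = 0) : p ∈ minorsIdeal K r n := by
  classical
  let J := minorsIdeal K r n
  let E : (IdxW r n →₀ ℕ) → (RC r n →₀ ℕ) := fun m => Multiset.toFinsupp (expo m.toMultiset)
  let ψ : MvPolynomial (RC r n) K →ₗ[K] (MvPolynomial (IdxW r n) K ⧸ J) :=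
    (basisMonomials (RC r n) K).constr K (fun e =>
      if h : ∃ m, E m = e then Ideal.Quotient.mk J (monomial h.choose 1) else 0)
  have h : ψ ∘ₗ (segre K r n).toLinearMap = (Ideal.Quotient.mkₐ K J).toLinearMap := by
    refine (basisMonomials (IdxW r n) K).ext fun m => ?_
    simp only [coe_basisMonomials, LinearMap.comp_apply, AlgHom.toLinearMap_apply,
      Ideal.Quotient.mkₐ_eq_mk]
    rw [segre_mon]
    have h1 : ψ (monomial (E m) 1) =
      if h : ∃ m', E m' = E m then Ideal.Quotient.mk J (monomial h.choose 1) else 0 := by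
      have := (basisMonomials (RC r n) K).constr_basis K (fun e =>
        if h : ∃ m, E m = e then Ideal.Quotient.mk J (monomial h.choose 1) else 0) (E m)
      simpa only [coe_basisMonomials] using this
    have hex : ∃ m', E m' = E m := ⟨m, rfl⟩
    refine h1.trans ?_
    rw [dif_pos hex, mon_eq, mon_eq]
    obtain ⟨ha, hb⟩ := expo_inj (Multiset.toFinsupp.injective hex.choose_spec)
    exact congr_mon K _ _ ha hb
  have h2 := LinearMap.congr_fun h p
  simp only [LinearMap.comp_apply, AlgHom.toLinearMap_apply, Ideal.Quotient.mkₐ_eq_mk, hp,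
    map_zero] at h2
  exact Ideal.Quotient.eq_zero_iff_mem.1 h2.symm

theorem le_ker (K : Type*) [Field K] {r : ℕ} {n : Fin r → ℕ} (p : MvPolynomial (IdxW r n) K)
    (hp : p ∈ minorsIdeal K r n) : segre K r n p = 0 := by
  have : minorsIdeal K r n ≤ RingHom.ker (segre K r n) := by
    refine Ideal.span_le.2 ?_
    rintro _ ⟨s, i, j, -, rfl⟩
    simp only [SetLike.mem_coe, RingHom.mem_ker, segre, map_sub, map_mul, aeval_X, rowI, colI]
    ring
  exact this hp

theorem vanish_segre (K : Type*) [Field K] [Infinite K] {r : ℕ} {n : Fin r → ℕ}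
    (p : MvPolynomial (IdxW r n) K) (hp : ∀ v ∈ W K r n, eval v p = 0) :
    segre K r n p = 0 := by
  let D : MvPolynomial (RC r n) K := ∏ s : Fin r,
    (X (Sum.inl ⟨s, 0⟩) * X (Sum.inr (s, 0)) * X (Sum.inr (s, 1)))
  have hD : D ≠ 0 := Finset.prod_ne_zero_iff.2 fun s _ =>
    mul_ne_zero (mul_ne_zero (X_ne_zero _) (X_ne_zero _)) (X_ne_zero _)
  refine (mul_eq_zero.1 (?_ : segre K r n p * D = 0)).resolve_right hD
  refine MvPolynomial.funext fun w => ?_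
  rw [map_mul, map_zero]
  by_cases hw : eval w D = 0
  · rw [hw, mul_zero]
  have hs : ∀ s : Fin r, w (Sum.inl ⟨s, 0⟩) ≠ 0 ∧ w (Sum.inr (s, 0)) ≠ 0 ∧
      w (Sum.inr (s, 1)) ≠ 0 := by
    intro s
    have := Finset.prod_ne_zero_iff.1 (by simpa only [D, map_prod] using hw) s (Finset.mem_univ s)
    simp only [map_mul, eval_X, ne_eq, mul_eq_zero, not_or] at this
    exact ⟨this.1.1, this.1.2, this.2⟩
  have he : eval w (segre K r n p) =
      eval (fun t => w (Sum.inl (rowI t)) * w (Sum.inr (colI t))) p := by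
    have : (aeval w).comp (segre K r n) =
        aeval (fun t => w (Sum.inl (rowI t)) * w (Sum.inr (colI t))) := by
      ext t
      simp [segre]
    simpa only [AlgHom.comp_apply, ← coe_aeval_eq_eval, RingHom.coe_coe] using
      DFunLike.congr_fun this p
  rw [he, hp, zero_mul]
  intro s
  obtain ⟨hx, h0, h1⟩ := hs s
  refine ⟨fun h => ?_, fun h => ?_, fun h => ?_⟩
  · exact mul_ne_zero hx h0 (congrFun h 0)
  · exact mul_ne_zero hx h1 (congrFun h 0)
  · have := (LinearIndependent.pair_iff.1 h (w (Sum.inr (s, 1))) (-w (Sum.inr (s, 0))) (by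
      funext i
      simp only [uVec, vVec, rowI, colI, Pi.add_apply, Pi.smul_apply, smul_eq_mul, Pi.zero_apply]
      ring)).1
    exact h1 this

theorem W_vanish (K : Type*) [Field K] {r : ℕ} {n : Fin r → ℕ}
    (p : MvPolynomial (IdxW r n) K) (hp : p ∈ minorsIdeal K r n) :
    ∀ v ∈ W K r n, eval v p = 0 := by
  intro v hv
  have : minorsIdeal K r n ≤ RingHom.ker (eval v) := by
    refine Ideal.span_le.2 ?_
    rintro _ ⟨s, i, j, -, rfl⟩
    simp only [SetLike.mem_coe, RingHom.mem_ker, map_sub, map_mul, eval_X]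
    obtain ⟨hu, -, hd⟩ := hv s
    rw [LinearIndependent.pair_iff' hu] at hd
    push Not at hd
    obtain ⟨a, ha⟩ := hd
    have hi := congrFun ha i
    have hj := congrFun ha j
    simp only [uVec, vVec, Pi.smul_apply, smul_eq_mul] at hi hj
    rw [← hi, ← hj]
    ring
  exact this hp

/-- The vanishing ideal of `W` equals the ideal generated by all the `2×2`
minors, and this ideal is prime. -/
theorem stmt13 (K : Type*) [Field K] [IsAlgClosed K]
    (r : ℕ) (hr : 1 ≤ r) (n : Fin r → ℕ) (hn : ∀ s, 1 ≤ n s) :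
    {p : MvPolynomial (IdxW r n) K | ∀ v ∈ W K r n, eval v p = 0}
      = ↑(minorsIdeal K r n) ∧ (minorsIdeal K r n).IsPrime := by
  haveI : Infinite K := inferInstance
  refine ⟨?_, ?_⟩
  · ext p
    exact ⟨fun h => ker_le K p (vanish_segre K p h), fun h => W_vanish K p h⟩
  · have : minorsIdeal K r n = RingHom.ker (segre K r n) := by
      ext p
      exact ⟨fun h => le_ker K p h, fun h => ker_le K p h⟩
    rw [this]
    exact RingHom.ker_isPrime _
end
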